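/- Let λ : ℂ → ℍ be a smooth, nowhere vanishing quaternion-valued function, and define P(z) = conj(λ(z))·j·λ(z) and Q(z) = −conj(λ(z))·k·λ(z) (the values of the 1-form η = λ̄·df·λ on ∂/∂x and ∂/∂y for the plane f(x+iy) = x·j − y·k). Then ∂P/∂y = ∂Q/∂x holds on all of ℂ (i.e. η is closed) if and only if there exists a smooth function ρ : ℂ → ℝ such that −(j·∂λ/∂y + k·∂λ/∂x) = ρ·λ on all of ℂ. -/

import Mathlib

/-- The imaginary unit `j` of the quaternions. -/
def qj : Quaternion ℝ := ⟨0, 0, 1, 0⟩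

/-- The imaginary unit `k` of the quaternions. -/
def qk : Quaternion ℝ := ⟨0, 0, 0, 1⟩

/-!
Write `D λ = -(a · ∂_u λ + b · ∂_v λ)` with `a`, `b` purely imaginary. Since `a` and `b` are skew,
the product rule gives `∂_u (λ̄ a λ) + ∂_v (λ̄ b λ) = conj (λ̄ · D λ) - λ̄ · D λ`, so `η` is closed
exactly when `λ̄ · D λ` is real. As `λ̄ = |λ|² λ⁻¹`, this says that `D λ` is a real multiple `ρ λ`
of `λ`, and `ρ = ⟪λ, D λ⟫ / |λ|²` is as regular as `D λ`.
-/

open scoped Quaternion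

instance {R : Type*} [CommRing R] [StarRing R] [TrivialStar R] : StarModule R ℍ[R] where
  star_smul r q := by rw [Quaternion.star_smul, star_trivial r]

theorem isSelfAdjoint_star_mul_iff_exists_eq_smul {R : Type*} [Field R] [LinearOrder R]
    [IsStrictOrderedRing R] {p q : ℍ[R]} (hp : p ≠ 0) :
    IsSelfAdjoint (star p * q) ↔ ∃ r : R, q = r • p := by
  constructor
  · intro h
    have h_real : star p * q = ((star p * q).re : R) := Quaternion.star_eq_self.mp h
    have h_smul : Quaternion.normSq p • q = (star p * q).re • p := by
      rw [← Quaternion.coe_mul_eq_smul, ← Quaternion.self_mul_star, mul_assoc, h_real,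
        Quaternion.mul_coe_eq_smul, Quaternion.re_coe]
    refine ⟨(Quaternion.normSq p)⁻¹ * (star p * q).re, ?_⟩
    rw [mul_smul, ← h_smul, inv_smul_smul₀ (Quaternion.normSq_ne_zero.mpr hp)]
  · rintro ⟨r, rfl⟩
    rw [isSelfAdjoint_iff, star_mul, star_star, Quaternion.star_smul, mul_smul_comm,
      smul_mul_assoc]

theorem contDiff_of_eq_smul {E F : Type*} [NormedAddCommGroup E] [NormedSpace ℝ E]
    [NormedAddCommGroup F] [InnerProductSpace ℝ F] {n : WithTop ℕ∞} {f g : E → F} {ρ : E → ℝ}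
    (hf : ContDiff ℝ n f) (hg : ContDiff ℝ n g) (hf_ne : ∀ z, f z ≠ 0)
    (h : ∀ z, g z = ρ z • f z) : ContDiff ℝ n ρ := by
  have h_sq_ne (z : E) : ‖f z‖ ^ 2 ≠ 0 := pow_ne_zero 2 (norm_ne_zero_iff.mpr (hf_ne z))
  have h_coeff : ρ = fun z => inner ℝ (f z) (g z) / ‖f z‖ ^ 2 := by
    funext z
    rw [h z, real_inner_smul_right, real_inner_self_eq_norm_sq, mul_div_cancel_right₀ _ (h_sq_ne z)]
  rw [h_coeff]
  exact (hf.inner ℝ hg).div (hf.norm_sq ℝ) h_sq_ne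

section StarAlgebra

variable (𝕜 : Type*) [NontriviallyNormedField 𝕜] {E A : Type*} [NormedAddCommGroup E]
  [NormedSpace 𝕜 E] [NormedRing A] [NormedAlgebra 𝕜 A]

/-- The first-order operator `f ↦ -(a · ∂_u f + b · ∂_v f)`. For `a = j`, `b = k`, `u = i` and
`v = 1` it is the Dirac operator of the plane `x + i y ↦ x j - y k`. -/
noncomputable def diracOperator (a b : A) (u v : E) (f : E → A) (z : E) : A :=
  -(a * fderiv 𝕜 f z u + b * fderiv 𝕜 f z v)

variable {𝕜}

theorem contDiff_diracOperator {m n : WithTop ℕ∞} (a b : A) (u v : E) {f : E → A}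
    (hf : ContDiff 𝕜 n f) (hmn : m + 1 ≤ n) : ContDiff 𝕜 m (diracOperator 𝕜 a b u v f) := by
  have hf' (w : E) : ContDiff 𝕜 m fun z => fderiv 𝕜 f z w :=
    (hf.fderiv_right hmn).clm_apply contDiff_const
  exact ((contDiff_const.mul (hf' u)).add (contDiff_const.mul (hf' v))).neg

variable [StarRing 𝕜] [TrivialStar 𝕜] [StarRing A] [ContinuousStar A] [StarModule 𝕜 A]

theorem fderiv_star_mul_mul_apply {f : E → A} {z : E} (hf : DifferentiableAt 𝕜 f z) (a : A)
    (v : E) :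
    fderiv 𝕜 (fun w => star (f w) * a * f w) z v =
      star (fderiv 𝕜 f z v) * a * f z + star (f z) * a * fderiv 𝕜 f z v := by
  rw [fderiv_fun_mul' (hf.star.mul_const a) hf, fderiv_mul_const' hf.star, fderiv_star, add_comm]
  rfl

theorem fderiv_star_mul_mul_eq_iff_isSelfAdjoint {a b : A} (ha : a ∈ skewAdjoint A)
    (hb : b ∈ skewAdjoint A) (u v : E) {f : E → A} {z : E} (hf : DifferentiableAt 𝕜 f z) :
    fderiv 𝕜 (fun w => star (f w) * a * f w) z u =
        fderiv 𝕜 (fun w => -(star (f w) * b * f w)) z v ↔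
      IsSelfAdjoint (star (f z) * diracOperator 𝕜 a b u v f z) := by
  rw [fderiv_fun_neg, neg_apply, fderiv_star_mul_mul_apply hf,
    fderiv_star_mul_mul_apply hf, isSelfAdjoint_iff, ← sub_eq_zero, ← sub_eq_zero (a := star _)]
  apply Eq.congr_left
  simp only [diracOperator, star_mul, star_star, star_neg, star_add, skewAdjoint.mem_iff.mp ha,
    skewAdjoint.mem_iff.mp hb]
  noncomm_ring

end StarAlgebra

theorem dirac_closedness_iff_eigen_general {E : Type*} [NormedAddCommGroup E] [NormedSpace ℝ E]
    {a b : ℍ[ℝ]} (ha : a ∈ skewAdjoint ℍ[ℝ]) (hb : b ∈ skewAdjoint ℍ[ℝ]) (u v : E)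
    {m n : WithTop ℕ∞} (hmn : m + 1 ≤ n) {lam : E → ℍ[ℝ]} (h_smooth : ContDiff ℝ n lam)
    (h_ne : ∀ z, lam z ≠ 0) :
    (∀ z, fderiv ℝ (fun w => star (lam w) * a * lam w) z u =
        fderiv ℝ (fun w => -(star (lam w) * b * lam w)) z v) ↔
      ∃ ρ : E → ℝ, ContDiff ℝ m ρ ∧ ∀ z, diracOperator ℝ a b u v lam z = ρ z • lam z := by
  have h_diff : Differentiable ℝ lam :=
    h_smooth.differentiable (one_pos.trans_le (le_add_self.trans hmn)).ne'
  have h_closed_iff (z : E) :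
      fderiv ℝ (fun w => star (lam w) * a * lam w) z u =
          fderiv ℝ (fun w => -(star (lam w) * b * lam w)) z v ↔
        ∃ r : ℝ, diracOperator ℝ a b u v lam z = r • lam z :=
    (fderiv_star_mul_mul_eq_iff_isSelfAdjoint ha hb u v (h_diff z)).trans
      (isSelfAdjoint_star_mul_iff_exists_eq_smul (h_ne z))
  simp only [h_closed_iff, Classical.skolem]
  refine exists_congr fun ρ => (and_iff_right_of_imp fun h_eigen => ?_).symm
  exact contDiff_of_eq_smul (h_smooth.of_le (le_self_add.trans hmn))
    (contDiff_diracOperator a b u v h_smooth hmn) h_ne h_eigen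

theorem qj_mem_skewAdjoint : qj ∈ skewAdjoint ℍ[ℝ] :=
  Quaternion.star_eq_neg.mpr rfl

theorem qk_mem_skewAdjoint : qk ∈ skewAdjoint ℍ[ℝ] :=
  Quaternion.star_eq_neg.mpr rfl

/-- For a smooth nowhere vanishing `λ : ℂ → ℍ`, the 1-form `η = λ̄ · df · λ`
(for the plane `f(x+iy) = x·j − y·k`), with values `P = λ̄·j·λ` on `∂/∂x` and
`Q = −λ̄·k·λ` on `∂/∂y`, is closed (`∂P/∂y = ∂Q/∂x` everywhere) if and only if
there is a smooth real function `ρ` with `D λ := −(j·∂λ/∂y + k·∂λ/∂x) = ρ·λ`. -/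
theorem dirac_closedness_iff_eigen (lam : ℂ → Quaternion ℝ)
    (hsmooth : ContDiff ℝ (⊤ : ℕ∞) lam) (hnz : ∀ z : ℂ, lam z ≠ 0) :
    (∀ z : ℂ,
        fderiv ℝ (fun w : ℂ => star (lam w) * qj * lam w) z Complex.I =
          fderiv ℝ (fun w : ℂ => -(star (lam w) * qk * lam w)) z 1) ↔
      (∃ ρ : ℂ → ℝ, ContDiff ℝ (⊤ : ℕ∞) ρ ∧
        ∀ z : ℂ,
          -(qj * fderiv ℝ lam z Complex.I + qk * fderiv ℝ lam z 1) = ρ z • lam z) := by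
  exact dirac_closedness_iff_eigen_general qj_mem_skewAdjoint qk_mem_skewAdjoint Complex.I 1
    (by simp) hsmooth hnz
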